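/- arXiv:1605.03533 — 2 statements merged into one kernel-verified Lean document; each statement's English description precedes it below -/
import Mathlib

section
/- If −1 − λ is a simple eigenvalue of the complement Ḡ of a graph G, where λ is an eigenvalue of G, then −1 − λ is a non-main eigenvalue of Ḡ. -/
/-!
Write `μ = -1 - λ` and let `y` be a `λ`-eigenvector of `G`. Since `A(Gᶜ) = J - I - A(G)`,
we get `A(Gᶜ) y = μ y + (∑ y) 𝟙`. If `x` is a `μ`-eigenvector of `Gᶜ`, pairing this identity
with `x` and using the symmetry of `A(Gᶜ)` gives `(∑ y) (∑ x) = 0`. When `μ` is a main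
eigenvalue, `x` can be taken with `∑ x ≠ 0`, so `∑ y = 0` and `y` is itself a `μ`-eigenvector
of `Gᶜ`. But the `μ`-eigenspace is a line, so `y` is a multiple of `x`, and `∑ y = 0`
forces `y = 0`, a contradiction.
-/

open Matrix Finset Polynomial

variable {V : Type*} [Fintype V] [DecidableEq V]

/-- `μ` is an eigenvalue of the adjacency matrix of `G`. -/
def SimpleGraph.IsEigenvalue (G : SimpleGraph V) [DecidableRel G.Adj] (μ : ℝ) : Prop :=
  ∃ x : V → ℝ, x ≠ 0 ∧ (G.adjMatrix ℝ) *ᵥ x = μ • x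

/-- `μ` is a main eigenvalue: some associated eigenvector is not orthogonal
to the all-ones vector. -/
def SimpleGraph.IsMainEigenvalue (G : SimpleGraph V) [DecidableRel G.Adj] (μ : ℝ) : Prop :=
  ∃ x : V → ℝ, x ≠ 0 ∧ (G.adjMatrix ℝ) *ᵥ x = μ • x ∧ ∑ v, x v ≠ 0

/-- `μ` is a non-main eigenvalue: it is an eigenvalue whose eigenspace is
orthogonal to the all-ones vector. -/
def SimpleGraph.IsNonMainEigenvalue (G : SimpleGraph V) [DecidableRel G.Adj] (μ : ℝ) : Prop :=
  G.IsEigenvalue μ ∧ ¬ G.IsMainEigenvalue μ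

/-- The multiplicity of `μ` as an eigenvalue of `G` (as a root of the
characteristic polynomial of the adjacency matrix). -/
noncomputable def SimpleGraph.eigMult (G : SimpleGraph V) [DecidableRel G.Adj] (μ : ℝ) : ℕ :=
  ((G.adjMatrix ℝ).charpoly).rootMultiplicity μ

/-- `G` is harmonic: its degree vector is an eigenvector of the adjacency matrix
associated with a positive integer eigenvalue. -/
def SimpleGraph.IsHarmonic (G : SimpleGraph V) [DecidableRel G.Adj] : Prop :=
  ∃ ℓ : ℕ, 0 < ℓ ∧
    (G.adjMatrix ℝ) *ᵥ (fun v => (G.degree v : ℝ)) = (ℓ : ℝ) • (fun v => (G.degree v : ℝ))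

/-- On a `lam`-eigenvector `y` of `G`, the complement acts as `-1 - lam` up to the constant
vector `∑ v, y v`, which is the contribution of the all-ones matrix. -/
lemma compl_mulVec_of_eigenvector (G : SimpleGraph V) [DecidableRel G.Adj] {lam : ℝ} {y : V → ℝ}
    (hy : (G.adjMatrix ℝ) *ᵥ y = lam • y) :
    (Gᶜ.adjMatrix ℝ) *ᵥ y = (-1 - lam) • y + fun _ => ∑ v, y v := by
  have key := G.one_add_adjMatrix_add_compl_adjMatrix_eq_of_one ℝ
  rw [G.compl_adjMatrix_eq_adjMatrix_compl ℝ] at key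
  funext i
  have h := congrFun (congrArg (· *ᵥ y) key) i
  have hyi := congrFun hy i
  have hJ : ((Matrix.of 1 : Matrix V V ℝ) *ᵥ y) i = ∑ v, y v := by
    simp [Matrix.mulVec, dotProduct]
  simp only [Matrix.add_mulVec, Matrix.one_mulVec, Pi.add_apply, hJ, hyi, Pi.smul_apply,
    smul_eq_mul] at h ⊢
  linarith

/-- The eigenspace of a simple eigenvalue is a line, because geometric multiplicity is at most
algebraic multiplicity. -/
lemma eigenvector_eq_smul_of_eigMult_eq_one (H : SimpleGraph V) [DecidableRel H.Adj] {μ : ℝ}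
    (hμ : H.eigMult μ = 1) {x y : V → ℝ} (hx0 : x ≠ 0) (hx : (H.adjMatrix ℝ) *ᵥ x = μ • x)
    (hy : (H.adjMatrix ℝ) *ᵥ y = μ • y) : ∃ c : ℝ, y = c • x := by
  set f := Matrix.toLin' (H.adjMatrix ℝ) with hf
  have hle : Module.finrank ℝ (Module.End.eigenspace f μ) ≤ 1 := by
    have := LinearMap.finrank_eigenspace_le f μ
    rwa [hf, Matrix.charpoly_toLin', ← hf,
      show (H.adjMatrix ℝ).charpoly.rootMultiplicity μ = 1 from hμ] at this
  have hxm : x ∈ Module.End.eigenspace f μ := by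
    rw [Module.End.mem_eigenspace_iff, hf, Matrix.toLin'_apply, hx]
  have hym : y ∈ Module.End.eigenspace f μ := by
    rw [Module.End.mem_eigenspace_iff, hf, Matrix.toLin'_apply, hy]
  obtain ⟨v, hv⟩ := finrank_le_one_iff.mp hle
  obtain ⟨a, ha⟩ := hv ⟨x, hxm⟩
  obtain ⟨b, hb⟩ := hv ⟨y, hym⟩
  have ha' : a • (v : V → ℝ) = x := congrArg Subtype.val ha
  have hb' : b • (v : V → ℝ) = y := congrArg Subtype.val hb
  have ha0 : a ≠ 0 := by
    rintro rfl
    exact hx0 (by rw [← ha', zero_smul])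
  exact ⟨b / a, by rw [← ha', ← hb', smul_smul, div_mul_cancel₀ b ha0]⟩

theorem simple_compl_eigenvalue_nonmain (G : SimpleGraph V) [DecidableRel G.Adj]
    (lam : ℝ) (hlam : G.IsEigenvalue lam)
    (h : Gᶜ.IsEigenvalue (-1 - lam)) (hsimple : Gᶜ.eigMult (-1 - lam) = 1) :
    Gᶜ.IsNonMainEigenvalue (-1 - lam) := by
  refine ⟨h, ?_⟩
  rintro ⟨x, hx0, hx, hxs⟩
  obtain ⟨y, hy0, hy⟩ := hlam
  have hBy := compl_mulVec_of_eigenvector G hy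
  have hys : ∑ v, y v = 0 := by
    have hsymm : x ⬝ᵥ (Gᶜ.adjMatrix ℝ) *ᵥ y = ((Gᶜ.adjMatrix ℝ) *ᵥ x) ⬝ᵥ y := by
      rw [Matrix.dotProduct_mulVec, ← Matrix.mulVec_transpose, SimpleGraph.transpose_adjMatrix]
    have hconst : x ⬝ᵥ (fun _ => ∑ v, y v) = (∑ v, x v) * ∑ v, y v := by
      simp only [dotProduct, Finset.sum_mul]
    rw [hBy, hx, dotProduct_add, dotProduct_smul, smul_dotProduct, hconst] at hsymm
    exact (mul_eq_zero.mp (by linarith)).resolve_left hxs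
  have hy' : (Gᶜ.adjMatrix ℝ) *ᵥ y = (-1 - lam) • y := by
    rw [hBy, hys]
    exact add_zero _
  obtain ⟨c, rfl⟩ := eigenvector_eq_smul_of_eigMult_eq_one Gᶜ hsimple hx0 hx hy'
  have hc : c * ∑ v, x v = 0 := by
    simpa [← Finset.mul_sum] using hys
  exact hy0 (by rw [(mul_eq_zero.mp hc).resolve_right hxs, zero_smul])
end

section
/- For a graph G of order n, λ₂(Ḡ) = −1 − λₙ(G) < λ₁(Ḡ) if and only if either λₙ(G) is a main eigenvalue of G with multiplicity greater than one, or λₙ(G) is non-main and λ₁(Ḡ) is a simple eigenvalue. -/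
/-!
Write `A` and `B` for the adjacency matrices of `G` and its complement, `lamn` for the least
eigenvalue of `A`, and `μ = -1 - lamn`. Everything rests on the identity `A + B + I = J`.

* On vectors of zero sum `B` acts as `-I - A`. Hence `xᵀ B x ≤ μ xᵀ x` there, and since every
  two-dimensional space meets the zero-sum hyperplane, the second eigenvalue of `B` is at most `μ`
  (`exists_zero_sum_of_pair`, `compl_quadratic_le`).
* The zero-sum eigenvectors of `A` for `lamn` are the zero-sum eigenvectors of `B` for `μ`
  (`compl_eigen_of_eigen`, `eigen_of_compl_eigen`), and `lamn` and `μ` cannot both be main for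
  their respective matrices (`sum_mul_sum_eq_zero`).
* By a Perron–Frobenius argument the largest eigenvalue of `B` has an eigenvector of nonzero sum,
  namely the entrywise absolute value of any eigenvector (`exists_main_eigenvector`).

So if `μ` is the second eigenvalue and is not the largest, then the largest is simple, and if
moreover `lamn` is main, then the eigenvectors of `B` for `μ` have zero sum, which gives a second
eigenvector of `A` for `lamn`. Conversely, either condition on the right gives a nonzero zero-sum
eigenvector for `lamn`, so `μ` is an eigenvalue of `B`; if `μ` were the largest one, the
Perron–Frobenius eigenvector would contradict either `lamn` being main or `μ` being simple.
-/

open Matrix Finset Polynomial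

variable {V : Type*} [Fintype V] [DecidableEq V]

/-! ### Eigenbases of real matrices -/

/-- `b` is a basis of `V → ℝ`, orthonormal for the dot product, that diagonalizes `M` with
eigenvalues `e`. Completeness is encoded as the Parseval identity; `coord_mulVec` is the statement
`M b i = e i b i` for a symmetric `M`, read in coordinates. -/
structure IsEigenbasis (M : Matrix V V ℝ) (e : V → ℝ) (b : V → V → ℝ) : Prop where
  orthonormal : ∀ i j, b i ⬝ᵥ b j = if i = j then 1 else 0
  parseval : ∀ x y, x ⬝ᵥ y = ∑ i, (b i ⬝ᵥ x) * (b i ⬝ᵥ y)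
  mulVec_basis : ∀ i, M *ᵥ b i = e i • b i
  coord_mulVec : ∀ i x, b i ⬝ᵥ M *ᵥ x = e i * (b i ⬝ᵥ x)

lemma rootMultiplicity_prod_X_sub_C (e : V → ℝ) (μ : ℝ) :
    (∏ i, (X - C (e i))).rootMultiplicity μ = #{i | e i = μ} := by
  have h : (∏ i, (X - C (e i))) = ((univ.val.map e).map fun a => X - C a).prod := by
    rw [Multiset.map_map]; rfl
  rw [h, ← count_roots, roots_multiset_prod_X_sub_C, Multiset.count_map]
  simp only [eq_comm (a := μ)]
  rfl

/-- A factorization of the characteristic polynomial lists the eigenvalues in an arbitrary order;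
the spectral theorem's eigenbasis can be reindexed to match it. -/
lemma exists_isEigenbasis (M : Matrix V V ℝ) (hM : M.IsSymm) (e : V → ℝ)
    (hchar : M.charpoly = ∏ i, (X - C (e i))) : ∃ b, IsEigenbasis M e b := by
  have hH : M.IsHermitian := by
    rw [Matrix.IsHermitian, conjTranspose_eq_transpose_of_trivial]; exact hM
  have hc : ∀ c, #{i | e i = c} = #{i | hH.eigenvalues i = c} := by
    intro c
    rw [← rootMultiplicity_prod_X_sub_C, ← rootMultiplicity_prod_X_sub_C, ← hchar]
    exact congrArg _ hH.charpoly_eq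
  have hc' : ∀ c, Nonempty ({i // e i = c} ≃ {i // hH.eigenvalues i = c}) := by
    intro c
    refine ⟨Fintype.equivOfCardEq ?_⟩
    rw [Fintype.card_subtype, Fintype.card_subtype, hc]
  let σ : V ≃ V := Equiv.ofFiberEquiv fun c => (hc' c).some
  have hσ : ∀ i, hH.eigenvalues (σ i) = e i := Equiv.ofFiberEquiv_map _
  let B := hH.eigenvectorBasis.reindex σ.symm
  have hB : ∀ i, M *ᵥ (B i).ofLp = e i • (B i).ofLp := by
    intro i
    have := hH.mulVec_eigenvectorBasis (σ i)
    rw [hσ] at this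
    simpa [B] using this
  refine ⟨fun i => (B i).ofLp, ?_, ?_, hB, ?_⟩
  · intro i j
    have := orthonormal_iff_ite.mp B.orthonormal i j
    rw [EuclideanSpace.inner_eq_star_dotProduct] at this
    simpa [dotProduct_comm] using this
  · intro x y
    have := B.sum_inner_mul_inner (WithLp.toLp 2 x) (WithLp.toLp 2 y)
    simp only [EuclideanSpace.inner_eq_star_dotProduct, star_trivial] at this
    rw [dotProduct_comm x y, ← this]
    exact sum_congr rfl fun i _ => by rw [dotProduct_comm y]
  · intro i x
    rw [dotProduct_mulVec, ← mulVec_transpose, hM.eq, hB, smul_dotProduct, smul_eq_mul]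

namespace IsEigenbasis

variable {M : Matrix V V ℝ} {e : V → ℝ} {b : V → V → ℝ}

lemma ext_coord (h : IsEigenbasis M e b) {x y : V → ℝ} (hxy : ∀ i, b i ⬝ᵥ x = b i ⬝ᵥ y) :
    x = y := by
  have : (x - y) ⬝ᵥ (x - y) = 0 := by
    rw [h.parseval]
    exact sum_eq_zero fun i _ => by rw [dotProduct_sub, hxy, sub_self, zero_mul]
  exact sub_eq_zero.mp (dotProduct_self_eq_zero.mp this)

lemma basis_ne_zero (h : IsEigenbasis M e b) (i : V) : b i ≠ 0 := by
  intro h0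
  have := h.orthonormal i i
  simp [h0] at this

lemma exists_coord_ne_zero (h : IsEigenbasis M e b) {x : V → ℝ} (hx : x ≠ 0) :
    ∃ i, b i ⬝ᵥ x ≠ 0 := by
  by_contra! hc
  exact hx (h.ext_coord fun i => by rw [hc, dotProduct_zero])

lemma eq_of_coord_ne_zero (h : IsEigenbasis M e b) {x : V → ℝ} {μ : ℝ} (hx : M *ᵥ x = μ • x)
    {i : V} (hi : b i ⬝ᵥ x ≠ 0) : e i = μ := by
  have := h.coord_mulVec i x
  rw [hx, dotProduct_smul, smul_eq_mul] at this
  exact (mul_right_cancel₀ hi this).symm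

lemma exists_eq_of_eigen (h : IsEigenbasis M e b) {x : V → ℝ} {μ : ℝ} (hx0 : x ≠ 0)
    (hx : M *ᵥ x = μ • x) : ∃ i, e i = μ :=
  let ⟨i, hi⟩ := h.exists_coord_ne_zero hx0
  ⟨i, h.eq_of_coord_ne_zero hx hi⟩

lemma quadratic_sub (h : IsEigenbasis M e b) (c : ℝ) (x : V → ℝ) :
    c * (x ⬝ᵥ x) - x ⬝ᵥ M *ᵥ x = ∑ i, (c - e i) * (b i ⬝ᵥ x) ^ 2 := by
  rw [h.parseval x x, h.parseval x, mul_sum, ← sum_sub_distrib]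
  exact sum_congr rfl fun i _ => by rw [h.coord_mulVec]; ring

lemma le_quadratic (h : IsEigenbasis M e b) {c : ℝ} (hc : ∀ i, c ≤ e i) (x : V → ℝ) :
    c * (x ⬝ᵥ x) ≤ x ⬝ᵥ M *ᵥ x := by
  rw [← sub_nonpos, h.quadratic_sub]
  exact sum_nonpos fun i _ =>
    mul_nonpos_of_nonpos_of_nonneg (sub_nonpos.mpr (hc i)) (sq_nonneg _)

/-- The equality case of the Rayleigh bound: a maximizer of the quadratic form is an
eigenvector. -/
lemma eigen_of_le_quadratic (h : IsEigenbasis M e b) {c : ℝ} (hc : ∀ i, e i ≤ c) {x : V → ℝ}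
    (hx : c * (x ⬝ᵥ x) ≤ x ⬝ᵥ M *ᵥ x) : M *ᵥ x = c • x := by
  have hnn : ∀ i ∈ univ, 0 ≤ (c - e i) * (b i ⬝ᵥ x) ^ 2 := fun i _ =>
    mul_nonneg (sub_nonneg.mpr (hc i)) (sq_nonneg _)
  have h0 : ∑ i, (c - e i) * (b i ⬝ᵥ x) ^ 2 = 0 := by
    refine le_antisymm ?_ (sum_nonneg hnn)
    rw [← h.quadratic_sub]
    linarith
  refine h.ext_coord fun i => ?_
  rw [h.coord_mulVec, dotProduct_smul, smul_eq_mul]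
  rcases mul_eq_zero.mp ((sum_eq_zero_iff_of_nonneg hnn).mp h0 i (mem_univ i)) with h1 | h1
  · rw [sub_eq_zero.mp h1]
  · rw [pow_eq_zero_iff two_ne_zero] at h1
    rw [h1, mul_zero, mul_zero]

/-- If at most one `e i` equals `μ`, then any two eigenvectors for `μ` are proportional, so they
cannot be told apart by whether their sum vanishes. -/
lemma one_lt_card_of_sum (h : IsEigenbasis M e b) {x w : V → ℝ} {μ : ℝ}
    (hx : M *ᵥ x = μ • x) (hxs : ∑ v, x v ≠ 0)
    (hw : M *ᵥ w = μ • w) (hw0 : w ≠ 0) (hws : ∑ v, w v = 0) : 1 < #{i | e i = μ} := by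
  by_contra! hcard
  rw [card_le_one] at hcard
  obtain ⟨i, hi⟩ := h.exists_coord_ne_zero hw0
  have hei := h.eq_of_coord_ne_zero hw hi
  have hz : ∀ y : V → ℝ, M *ᵥ y = μ • y → ∀ j, j ≠ i → b j ⬝ᵥ y = 0 := by
    intro y hy j hj
    by_contra hne
    exact hj (hcard j (by simpa using h.eq_of_coord_ne_zero hy hne) i (by simpa using hei))
  have hxw : x = ((b i ⬝ᵥ x) / (b i ⬝ᵥ w)) • w := by
    refine h.ext_coord fun j => ?_
    rw [dotProduct_smul, smul_eq_mul]
    by_cases hj : j = i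
    · subst hj; field_simp
    · rw [hz x hx j hj, hz w hw j hj, mul_zero]
  apply hxs
  rw [hxw]
  simp only [Pi.smul_apply, smul_eq_mul, ← mul_sum, hws, mul_zero]

/-- The plane spanned by two basis vectors meets the hyperplane of zero-sum vectors. -/
lemma exists_zero_sum_of_pair (h : IsEigenbasis M e b) {i j : V} (hij : i ≠ j) :
    ∃ p q : ℝ, p • b i + q • b j ≠ 0 ∧ ∑ v, (p • b i + q • b j) v = 0 := by
  by_cases hs : ∑ v, b i v = 0
  · exact ⟨1, 0, by simpa using h.basis_ne_zero i, by simpa using hs⟩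
  · refine ⟨-∑ v, b j v, ∑ v, b i v, fun h0 => hs ?_, ?_⟩
    · have := congrArg (b j ⬝ᵥ ·) h0
      simpa [dotProduct_add, h.orthonormal, hij.symm] using this
    · simp only [Pi.add_apply, Pi.smul_apply, smul_eq_mul, sum_add_distrib, ← mul_sum]
      ring

lemma quadratic_pair (h : IsEigenbasis M e b) {i j : V} (hij : i ≠ j) {c : ℝ} (hi : c ≤ e i)
    (hj : c ≤ e j) (p q : ℝ) :
    c * ((p • b i + q • b j) ⬝ᵥ (p • b i + q • b j)) ≤
      (p • b i + q • b j) ⬝ᵥ M *ᵥ (p • b i + q • b j) := by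
  simp only [mulVec_add, mulVec_smul, h.mulVec_basis, dotProduct_add, add_dotProduct,
    dotProduct_smul, smul_dotProduct, h.orthonormal, smul_eq_mul, hij, hij.symm, if_true, if_false]
  nlinarith [mul_nonneg (sub_nonneg.mpr hi) (sq_nonneg p),
    mul_nonneg (sub_nonneg.mpr hj) (sq_nonneg q)]

/-- Two basis vectors for `μ` yield a nonzero zero-sum eigenvector for `μ`. -/
lemma exists_zero_sum_of_one_lt_card (h : IsEigenbasis M e b) {μ : ℝ}
    (hcard : 1 < #{i | e i = μ}) : ∃ w, w ≠ 0 ∧ M *ᵥ w = μ • w ∧ ∑ v, w v = 0 := by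
  obtain ⟨i, hi, j, hj, hij⟩ := one_lt_card.mp hcard
  simp only [mem_filter, mem_univ, true_and] at hi hj
  obtain ⟨p, q, hne, hsum⟩ := h.exists_zero_sum_of_pair hij
  refine ⟨_, hne, ?_, hsum⟩
  rw [mulVec_add, mulVec_smul, mulVec_smul, h.mulVec_basis, h.mulVec_basis, hi, hj, smul_add,
    smul_comm p, smul_comm q]

/-- The weak Perron–Frobenius theorem for an entrywise nonnegative matrix: replacing the
coordinates of an eigenvector for the largest eigenvalue by their absolute values does not decrease
the quadratic form, so it gives another eigenvector, whose sum is positive. -/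
lemma exists_main_eigenvector (h : IsEigenbasis M e b) (hM : ∀ i j, 0 ≤ M i j) {k : V}
    (hk : ∀ i, e i ≤ e k) : ∃ y, M *ᵥ y = e k • y ∧ ∑ v, y v ≠ 0 := by
  refine ⟨fun v => |b k v|, h.eigen_of_le_quadratic hk ?_, fun h0 => h.basis_ne_zero k ?_⟩
  · have h1 : (fun v => |b k v|) ⬝ᵥ (fun v => |b k v|) = b k ⬝ᵥ b k := by
      simp [dotProduct, abs_mul_abs_self]
    have h2 : e k * (b k ⬝ᵥ b k) = b k ⬝ᵥ M *ᵥ b k := by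
      rw [h.mulVec_basis, dotProduct_smul, smul_eq_mul]
    rw [h1, h2]
    simp only [dotProduct, mulVec, mul_sum]
    refine sum_le_sum fun i _ => sum_le_sum fun j _ => ?_
    calc b k i * (M i j * b k j) ≤ |b k i * (M i j * b k j)| := le_abs_self _
      _ = |b k i| * (M i j * |b k j|) := by rw [abs_mul, abs_mul, abs_of_nonneg (hM i j)]
  · funext v
    exact abs_eq_zero.mp ((sum_eq_zero_iff_of_nonneg fun i _ => abs_nonneg _).mp h0 v (mem_univ v))

end IsEigenbasis

/-! ### A graph and its complement -/

lemma compl_mulVec (G : SimpleGraph V) [DecidableRel G.Adj] (x : V → ℝ) :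
    (Gᶜ.adjMatrix ℝ) *ᵥ x = (fun _ => ∑ v, x v) - x - (G.adjMatrix ℝ) *ᵥ x := by
  have h := G.one_add_adjMatrix_add_compl_adjMatrix_eq_of_one (α := ℝ)
  rw [G.compl_adjMatrix_eq_adjMatrix_compl ℝ] at h
  have h' := congrArg (· *ᵥ x) h
  simp only [add_mulVec, one_mulVec] at h'
  have hJ : (of 1 : Matrix V V ℝ) *ᵥ x = fun _ => ∑ v, x v := by
    funext i; simp [mulVec, dotProduct]
  rw [← hJ, ← h']
  abel

lemma compl_eigen_of_eigen {G : SimpleGraph V} [DecidableRel G.Adj] {x : V → ℝ} {lam : ℝ}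
    (hx : (G.adjMatrix ℝ) *ᵥ x = lam • x) (hs : ∑ v, x v = 0) :
    (Gᶜ.adjMatrix ℝ) *ᵥ x = (-1 - lam) • x := by
  rw [compl_mulVec, hx, hs]
  funext i
  simp only [Pi.sub_apply, Pi.smul_apply, smul_eq_mul]
  ring

lemma eigen_of_compl_eigen {G : SimpleGraph V} [DecidableRel G.Adj] {x : V → ℝ} {lam : ℝ}
    (hx : (Gᶜ.adjMatrix ℝ) *ᵥ x = (-1 - lam) • x) (hs : ∑ v, x v = 0) :
    (G.adjMatrix ℝ) *ᵥ x = lam • x := by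
  rw [compl_mulVec, hs] at hx
  funext i
  have := congrFun hx i
  simp only [Pi.sub_apply, Pi.smul_apply, smul_eq_mul] at this ⊢
  linarith

/-- Evaluating `yᵀ (J - I - A) x` on eigenvectors `x` of `A` for `lam` and `y` of the complement
for `-1 - lam` leaves only the `J` term, the product of the two sums. -/
lemma sum_mul_sum_eq_zero {G : SimpleGraph V} [DecidableRel G.Adj] {x y : V → ℝ} {lam : ℝ}
    (hx : (G.adjMatrix ℝ) *ᵥ x = lam • x)
    (hy : (Gᶜ.adjMatrix ℝ) *ᵥ y = (-1 - lam) • y) : (∑ v, x v) * ∑ v, y v = 0 := by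
  have h1 : y ⬝ᵥ (Gᶜ.adjMatrix ℝ) *ᵥ x = (-1 - lam) * (y ⬝ᵥ x) := by
    rw [dotProduct_mulVec, ← mulVec_transpose, SimpleGraph.transpose_adjMatrix, hy,
      smul_dotProduct, smul_eq_mul]
  rw [compl_mulVec, hx, dotProduct_sub, dotProduct_sub, dotProduct_smul, smul_eq_mul] at h1
  have h2 : y ⬝ᵥ (fun _ => ∑ v, x v) = (∑ v, y v) * ∑ v, x v := by
    rw [dotProduct, sum_mul]
  rw [h2] at h1
  linarith

lemma compl_quadratic_le {G : SimpleGraph V} [DecidableRel G.Adj] {x : V → ℝ} {lam : ℝ}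
    (hA : lam * (x ⬝ᵥ x) ≤ x ⬝ᵥ (G.adjMatrix ℝ) *ᵥ x) (hs : ∑ v, x v = 0) :
    x ⬝ᵥ (Gᶜ.adjMatrix ℝ) *ᵥ x ≤ (-1 - lam) * (x ⬝ᵥ x) := by
  have h0 : x ⬝ᵥ (fun _ : V => (0 : ℝ)) = 0 := dotProduct_zero x
  rw [compl_mulVec, hs, dotProduct_sub, dotProduct_sub, h0]
  linarith


theorem compl_second_eigenvalue_iff {n : ℕ} (hn : 2 ≤ n)
    (G : SimpleGraph (Fin n)) [DecidableRel G.Adj]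
    (lamn : ℝ) (hmin : IsLeast {μ | G.IsEigenvalue μ} lamn)
    (e : Fin n → ℝ) (he : Antitone e)
    (hchar : (Gᶜ.adjMatrix ℝ).charpoly = ∏ i, (X - C (e i))) :
    (e ⟨1, by omega⟩ = -1 - lamn ∧ -1 - lamn < e ⟨0, by omega⟩) ↔
      ((G.IsMainEigenvalue lamn ∧ 1 < G.eigMult lamn) ∨
        (G.IsNonMainEigenvalue lamn ∧ Gᶜ.eigMult (e ⟨0, by omega⟩) = 1)) := by
  set i0 : Fin n := ⟨0, by omega⟩ with hi0
  set i1 : Fin n := ⟨1, by omega⟩ with hi1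
  have h01 : i0 ≠ i1 := by simp [hi0, hi1]
  have hAH : (G.adjMatrix ℝ).IsHermitian := by
    rw [Matrix.IsHermitian, conjTranspose_eq_transpose_of_trivial]
    exact G.isSymm_adjMatrix
  have hAchar : (G.adjMatrix ℝ).charpoly = ∏ i, (X - C (hAH.eigenvalues i)) := hAH.charpoly_eq
  obtain ⟨a, ha⟩ := exists_isEigenbasis _ G.isSymm_adjMatrix _ hAchar
  obtain ⟨b, hb⟩ := exists_isEigenbasis _ Gᶜ.isSymm_adjMatrix e hchar
  have hmultA : G.eigMult lamn = #{i | hAH.eigenvalues i = lamn} := by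
    rw [SimpleGraph.eigMult, hAchar, rootMultiplicity_prod_X_sub_C]
  have hmultB : ∀ μ, Gᶜ.eigMult μ = #{i | e i = μ} := by
    intro μ
    rw [SimpleGraph.eigMult, hchar, rootMultiplicity_prod_X_sub_C]
  have hlow : ∀ i, lamn ≤ hAH.eigenvalues i := fun i =>
    hmin.2 ⟨a i, ha.basis_ne_zero i, ha.mulVec_basis i⟩
  have htop : ∀ i, e i ≤ e i0 := fun i => he (Nat.zero_le _)
  have hi1' : ∀ i, i ≠ i0 → e i ≤ e i1 := by
    intro i hi
    refine he (Fin.mk_le_of_le_val ?_)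
    have : i.val ≠ 0 := fun h => hi (Fin.ext h)
    omega
  have hweyl : e i1 ≤ -1 - lamn := by
    obtain ⟨p, q, hne, hsum⟩ := hb.exists_zero_sum_of_pair h01
    have hl := hb.quadratic_pair h01 (htop i1) le_rfl p q
    have hu := compl_quadratic_le (ha.le_quadratic hlow (p • b i0 + q • b i1)) hsum
    have hpos : 0 < (p • b i0 + q • b i1) ⬝ᵥ (p • b i0 + q • b i1) :=
      lt_of_le_of_ne (sum_nonneg fun i _ => mul_self_nonneg _)
        (Ne.symm (mt dotProduct_self_eq_zero.mp hne))
    exact le_of_mul_le_mul_right (hl.trans hu) hpos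
  have hperron : ∃ y, (Gᶜ.adjMatrix ℝ) *ᵥ y = e i0 • y ∧ ∑ v, y v ≠ 0 := by
    refine hb.exists_main_eigenvector (fun i j => ?_) htop
    rw [SimpleGraph.adjMatrix_apply]
    split_ifs <;> norm_num
  -- Both cases of the converse reduce to showing that `-1 - lamn` is not the largest eigenvalue.
  have hfinish : ∀ w : Fin n → ℝ, w ≠ 0 → (Gᶜ.adjMatrix ℝ) *ᵥ w = (-1 - lamn) • w →
      e i0 ≠ -1 - lamn → e i1 = -1 - lamn ∧ -1 - lamn < e i0 := by
    intro w hw0 hw hne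
    obtain ⟨i, hi⟩ := hb.exists_eq_of_eigen hw0 hw
    have hii : i ≠ i0 := fun h => hne (h ▸ hi)
    exact ⟨le_antisymm hweyl (hi ▸ hi1' i hii), lt_of_le_of_ne (hi ▸ htop i) hne.symm⟩
  constructor
  · rintro ⟨h1, h0⟩
    by_cases hmain : G.IsMainEigenvalue lamn
    · left
      refine ⟨hmain, ?_⟩
      obtain ⟨x, -, hx, hxs⟩ := hmain
      have hy : (Gᶜ.adjMatrix ℝ) *ᵥ b i1 = (-1 - lamn) • b i1 := h1 ▸ hb.mulVec_basis i1
      have hys := (mul_eq_zero.mp (sum_mul_sum_eq_zero hx hy)).resolve_left hxs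
      rw [hmultA]
      exact ha.one_lt_card_of_sum hx hxs (eigen_of_compl_eigen hy hys) (hb.basis_ne_zero i1) hys
    · right
      refine ⟨⟨hmin.1, hmain⟩, ?_⟩
      rw [hmultB, card_eq_one]
      refine ⟨i0, ?_⟩
      ext i
      simp only [mem_filter, mem_univ, true_and, mem_singleton]
      refine ⟨fun hi => ?_, fun hi => by rw [hi]⟩
      by_contra hne
      have := hi1' i hne
      linarith
  · obtain ⟨y, hy, hys⟩ := hperron
    rintro (⟨⟨x, -, hx, hxs⟩, hm⟩ | ⟨⟨⟨w, hw0, hw⟩, hnm⟩, hsimple⟩)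
    · rw [hmultA] at hm
      obtain ⟨w, hw0, hw, hws⟩ := ha.exists_zero_sum_of_one_lt_card hm
      refine hfinish w hw0 (compl_eigen_of_eigen hw hws) fun heq => ?_
      rw [heq] at hy
      exact mul_ne_zero hxs hys (sum_mul_sum_eq_zero hx hy)
    · have hws : ∑ v, w v = 0 := by
        by_contra hne
        exact hnm ⟨w, hw0, hw, hne⟩
      have hwB := compl_eigen_of_eigen hw hws
      refine hfinish w hw0 hwB fun heq => ?_
      have := hb.one_lt_card_of_sum hy hys (heq ▸ hwB) hw0 hws
      rw [← hmultB] at this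
      omega
end
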